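/- arXiv:0909.0800 — 6 statements merged into one kernel-verified Lean document; each statement's English description precedes it below -/
import Mathlib

section
/- Let M_{0,0}, M_{1,0} : U → Mat_{m×m}(ℂ) be twice continuously differentiable functions on an open subset U ⊆ ℝ^N such that ∂_k M_{1,0} = M_{0,0}·(∂_k M_{0,0}) for every k ∈ {1,…,N}. Then M_{0,0} is a solution of the commutativity equation dM ∧ dM = 0: for all i, j ∈ {1,…,N} and at every point of U, the matrices ∂_i M_{0,0} and ∂_j M_{0,0} commute. -/
/-!
The master equation says `dM₁₀ = M₀₀ · dM₀₀`. By the symmetry of second derivatives both `dM₀₀`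
and `dM₁₀` are closed, so the Leibniz rule gives `0 = d(M₀₀ · dM₀₀) = dM₀₀ ∧ dM₀₀`. Fréchet
derivatives depend only on the topology, so matrices may be given the `ℓ^∞` operator norm, which
makes them a normed algebra.
-/

/-- The `k`-th partial derivative of a matrix-valued function on `ℝ^N`,
taken entrywise (`fderiv` applied to the `k`-th standard basis vector). -/
noncomputable def pderM {N m : ℕ} (k : Fin N)
    (M : (Fin N → ℝ) → Matrix (Fin m) (Fin m) ℂ) (x : Fin N → ℝ) :
    Matrix (Fin m) (Fin m) ℂ :=
  Matrix.of fun i j => fderiv ℝ (fun y => M y i j) x (Pi.single k 1)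

open Filter Topology

section NormedAlgebra

variable {𝕜 E : Type*} [NontriviallyNormedField 𝕜]

instance instIsBoundedSMulContinuousLinearMap {R F : Type*} [SeminormedRing R]
    [SeminormedAddCommGroup E] [NormedSpace 𝕜 E] [SeminormedAddCommGroup F] [NormedSpace 𝕜 F]
    [Module R F] [IsBoundedSMul R F] [SMulCommClass 𝕜 R F] : IsBoundedSMul R (E →L[𝕜] F) :=
  .of_norm_smul_le fun r L => by
    refine (r • L).opNorm_le_bound (by positivity) fun v => ?_
    calc ‖r • L v‖ ≤ ‖r‖ * ‖L v‖ := norm_smul_le r (L v)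
      _ ≤ ‖r‖ * (‖L‖ * ‖v‖) := by gcongr; exact L.le_opNorm v
      _ = ‖r‖ * ‖L‖ * ‖v‖ := (mul_assoc _ _ _).symm

theorem commutativity_of_first_master_equation_general [IsRCLikeNormedField 𝕜]
    [NormedAddCommGroup E] [NormedSpace 𝕜 E] {A : Type*} [NormedRing A] [NormedAlgebra 𝕜 A]
    {f g : E → A} {f' : E → E →L[𝕜] A} {x : E}
    (hf : ∀ᶠ y in 𝓝 x, HasFDerivAt f (f' y) y) (hf' : DifferentiableAt 𝕜 f' x)
    (hg : ∀ᶠ y in 𝓝 x, HasFDerivAt g (f y • f' y) y) (v w : E) :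
    Commute (f' x v) (f' x w) := by
  set f'' := fderiv 𝕜 f' x
  have hf'' : HasFDerivAt f' f'' x := hf'.hasFDerivAt
  have hg'' : HasFDerivAt (fun y => f y • f' y) (f x • f'' + (f' x).smulRight (f' x)) x :=
    hf.self_of_nhds.smul hf''
  have hf_symm : f'' v w = f'' w v := second_derivative_symmetric_of_eventually hf hf'' v w
  have hg_symm : f x * f'' v w + f' x v * f' x w = f x * f'' w v + f' x w * f' x v :=
    second_derivative_symmetric_of_eventually hg hg'' v w
  rw [hf_symm] at hg_symm
  exact add_left_cancel hg_symm

end NormedAlgebra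

open scoped Matrix.Norms.Operator

section MatrixCalculus

variable {𝕜 E F m n : Type*} [NontriviallyNormedField 𝕜] [NormedAddCommGroup E]
  [NormedSpace 𝕜 E] [NormedAddCommGroup F] [NormedSpace 𝕜 F] {M : E → Matrix m n F}

theorem contDiffOn_matrix [Fintype m] [Fintype n] {s : Set E} {k : WithTop ℕ∞}
    (hM : ∀ i j, ContDiffOn 𝕜 k (fun y => M y i j) s) : ContDiffOn 𝕜 k M s := by
  let ofCLM : (m → n → F) →L[𝕜] Matrix m n F :=
    ⟨(Matrix.ofLinearEquiv 𝕜).toLinearMap, continuous_id⟩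
  exact ofCLM.contDiff.comp_contDiffOn (contDiffOn_pi.2 fun i => contDiffOn_pi.2 (hM i))

theorem fderiv_matrix_apply [Finite m] [Finite n] {x : E} (hM : DifferentiableAt 𝕜 M x) (v : E)
    (i : m) (j : n) : fderiv 𝕜 (fun y => M y i j) x v = fderiv 𝕜 M x v i j := by
  have := Fintype.ofFinite m
  have := Fintype.ofFinite n
  let entryCLM : Matrix m n F →L[𝕜] F :=
    ⟨Matrix.entryLinearMap 𝕜 F i j, continuous_id.matrix_elem i j⟩
  exact DFunLike.congr_fun (entryCLM.hasFDerivAt.comp x hM.hasFDerivAt).fderiv v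

end MatrixCalculus

section PartialDerivatives

variable {N m : ℕ} {M M' : (Fin N → ℝ) → Matrix (Fin m) (Fin m) ℂ} {x : Fin N → ℝ}

theorem pderM_eq_fderiv (hM : DifferentiableAt ℝ M x) (k : Fin N) :
    pderM k M x = fderiv ℝ M x (Pi.single k 1) := by
  ext i j
  exact fderiv_matrix_apply hM (Pi.single k 1) i j

theorem hasFDerivAt_of_pderM_eq_mul (hM : DifferentiableAt ℝ M x) (hM' : DifferentiableAt ℝ M' x)
    {C : Matrix (Fin m) (Fin m) ℂ} (h : ∀ k, pderM k M' x = C * pderM k M x) :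
    HasFDerivAt M' (C • fderiv ℝ M x) x := by
  have hfderiv : fderiv ℝ M' x = C • fderiv ℝ M x := by
    refine ContinuousLinearMap.coe_injective ((Pi.basisFun ℝ (Fin N)).ext fun k => ?_)
    simpa [pderM_eq_fderiv hM, pderM_eq_fderiv hM'] using h k
  exact hfderiv ▸ hM'.hasFDerivAt

end PartialDerivatives

/-- If `M₀₀, M₁₀ : U → Mat_{m×m}(ℂ)` are C² on an open `U ⊆ ℝ^N` and satisfy the
first master equation `∂ₖ M₁₀ = M₀₀ · ∂ₖ M₀₀`, then `M₀₀` solves the commutativity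
equation: all partial derivatives of `M₀₀` commute pairwise on `U`. -/
theorem commutativity_of_first_master_equation
    {m N : ℕ} (hm : 1 ≤ m) (hN : 1 ≤ N)
    (U : Set (Fin N → ℝ)) (hU : IsOpen U)
    (M00 M10 : (Fin N → ℝ) → Matrix (Fin m) (Fin m) ℂ)
    (hM00 : ∀ i j : Fin m, ContDiffOn ℝ 2 (fun x => M00 x i j) U)
    (hM10 : ∀ i j : Fin m, ContDiffOn ℝ 2 (fun x => M10 x i j) U)
    (hME : ∀ k : Fin N, ∀ x ∈ U, pderM k M10 x = M00 x * pderM k M00 x) :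
    ∀ i j : Fin N, ∀ x ∈ U,
      pderM i M00 x * pderM j M00 x = pderM j M00 x * pderM i M00 x := by
  intro i j x hx
  have hC2 : ContDiffOn ℝ 2 M00 U := contDiffOn_matrix hM00
  have hdM00 : ∀ y ∈ U, DifferentiableAt ℝ M00 y := fun y hy =>
    (hC2.differentiableOn two_ne_zero).differentiableAt (hU.mem_nhds hy)
  have hdM10 : ∀ y ∈ U, DifferentiableAt ℝ M10 y := fun y hy =>
    ((contDiffOn_matrix hM10).differentiableOn two_ne_zero).differentiableAt (hU.mem_nhds hy)
  have hd2M00 : DifferentiableAt ℝ (fderiv ℝ M00) x :=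
    ((hC2.fderiv_of_isOpen hU one_add_one_eq_two.le).differentiableOn one_ne_zero).differentiableAt
      (hU.mem_nhds hx)
  simp only [pderM_eq_fderiv (hdM00 x hx)]
  exact commutativity_of_first_master_equation_general
    ((hU.eventually_mem hx).mono fun y hy => (hdM00 y hy).hasFDerivAt) hd2M00
    ((hU.eventually_mem hx).mono fun y hy =>
      hasFDerivAt_of_pderM_eq_mul (hdM00 y hy) (hdM10 y hy) (hME · y hy)) _ _
end

section
/- Let (M_{a,b}) be a tower of matrix potentials on U, let s ∈ Mat_{m×m}(ℂ) and l ≥ 1, and write M'_{a,b} := (s z^{−l} . M)_{a,b}. Then the linearized master equations hold: for all a, b ≥ 0 and all k ∈ {1,…,N}, (i) ∂_k M'_{a+1,b} = M'_{a,0}·(∂_k M_{0,b}) + M_{a,0}·(∂_k M'_{0,b}); (ii) ∂_k M'_{a,b+1} = (∂_k M'_{a,0})·M_{0,b} + (∂_k M_{a,0})·M'_{0,b}; (iii) M'_{a+1,b} + M'_{a,b+1} = M'_{a,0}·M_{0,b} + M_{a,0}·M'_{0,b}. That is, the infinitesimal lower-triangular action preserves the master equations. -/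
/-- The infinitesimal lower-triangular action of `s·z^{−l}` (`l ≥ 1`) on a family
`(M_{a,b})`: `(s z^{−l}.M)_{a,b} = s·M_{a−l,b} − (−1)^l·M_{a,b−l}·s
+ (−1)^b·[a+b+1 = l]·s`, with `M_{a,b} := 0` for negative indices. -/
noncomputable def lowAct {N m : ℕ} (s : Matrix (Fin m) (Fin m) ℂ) (l : ℕ)
    (M : ℕ → ℕ → (Fin N → ℝ) → Matrix (Fin m) (Fin m) ℂ)
    (a b : ℕ) (x : Fin N → ℝ) : Matrix (Fin m) (Fin m) ℂ :=
  (if l ≤ a then s * M (a - l) b x else 0)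
    - (-1 : ℂ) ^ l • (if l ≤ b then M a (b - l) x * s else 0)
    + (-1 : ℂ) ^ b • (if a + b + 1 = l then s else 0)

/-!
Put `P(z) = 1 + ∑ M_{a,0} z^{-a-1}` and `Q(w) = 1 + ∑ M_{0,b} w^{-b-1}`, and extend `M` by zero to
`ℤ × ℤ`. The master equations then hold at all integer indices in the form
`∂M_{a+1,b} = P_a ∂M_{0,b}`, `∂M_{a,b+1} = ∂M_{a,0} Q_b` and
`M_{a+1,b} + M_{a,b+1} = P_a Q_b - [a = b = -1]`, where `P_{-1} = Q_{-1} = 1`. In this form they can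
be shifted by `l` without boundary cases. The constant term of the action is exactly what turns the
shift of `M_{a,0}` into the shift of `P`, and likewise for `Q`, so that `M'_{a,0} = s P_{a-l}` and
`M'_{0,b} = -(-1)^l Q_{b-l} s`. Multiplying the shifted equations by `s` gives the linearized ones.
-/

section ZeroExtension

/-- The extension of a family indexed by `ℕ × ℕ` to `ℤ × ℤ` under the convention that `f a b = 0`
when `a < 0` or `b < 0`. -/
def zeroExtend {α : Type*} [Zero α] (f : ℕ → ℕ → α) : ℤ → ℤ → α
  | .ofNat a, .ofNat b => f a b
  | _, _ => 0

variable {α : Type*} [Zero α] (f : ℕ → ℕ → α)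

@[simp]
lemma zeroExtend_natCast (a b : ℕ) : zeroExtend f a b = f a b := rfl

@[simp]
lemma zeroExtend_natCast_zero (a : ℕ) : zeroExtend f a 0 = f a 0 := rfl

@[simp]
lemma zeroExtend_zero_natCast (b : ℕ) : zeroExtend f 0 b = f 0 b := rfl

lemma zeroExtend_of_neg_left {a : ℤ} (ha : a < 0) (b : ℤ) : zeroExtend f a b = 0 := by
  cases a with
  | ofNat a => exact absurd ha (by simp)
  | negSucc a => rfl

lemma zeroExtend_of_neg_right (a : ℤ) {b : ℤ} (hb : b < 0) : zeroExtend f a b = 0 := by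
  cases b with
  | ofNat b => exact absurd hb (by simp)
  | negSucc b => cases a <;> rfl

lemma zeroExtend_natCast_sub_left (a b l : ℕ) :
    zeroExtend f (a - l) b = if l ≤ a then f (a - l) b else 0 := by
  split_ifs with h
  · rw [← Nat.cast_sub h, zeroExtend_natCast]
  · exact zeroExtend_of_neg_left f (by lia) b

lemma zeroExtend_natCast_sub_right (a b l : ℕ) :
    zeroExtend f a (b - l) = if l ≤ b then f a (b - l) else 0 := by
  split_ifs with h
  · rw [← Nat.cast_sub h, zeroExtend_natCast]
  · exact zeroExtend_of_neg_right f a (by lia)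

lemma map_zeroExtend {β : Type*} [Zero β] {φ : α → β} (hφ : φ 0 = 0) (a b : ℤ) :
    φ (zeroExtend f a b) = zeroExtend (fun a b => φ (f a b)) a b := by
  cases a <;> cases b <;> first | rfl | exact hφ

end ZeroExtension

section MasterEquations

variable {R : Type*}

/-- The coefficients of the generating series `1 + ∑ f a 0 * z ^ (-a - 1)`, the index `a : ℤ`
standing for the exponent `-a - 1`, so that the leading `1` sits at `a = -1`. -/
def colSeries [Zero R] [One R] (f : ℕ → ℕ → R) (a : ℤ) : R :=
  if a = -1 then 1 else zeroExtend f a 0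

/-- The coefficients of the generating series `1 + ∑ f 0 b * w ^ (-b - 1)`, indexed as in
`colSeries`. -/
def rowSeries [Zero R] [One R] (f : ℕ → ℕ → R) (b : ℤ) : R :=
  if b = -1 then 1 else zeroExtend f 0 b

section Coefficients

variable [Zero R] [One R] (f : ℕ → ℕ → R)

@[simp]
lemma colSeries_natCast (a : ℕ) : colSeries f a = f a 0 := by
  simp [colSeries, show (a : ℤ) ≠ -1 by lia]

@[simp]
lemma rowSeries_natCast (b : ℕ) : rowSeries f b = f 0 b := by
  simp [rowSeries, show (b : ℤ) ≠ -1 by lia]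

@[simp]
lemma colSeries_neg_one : colSeries f (-1) = 1 := if_pos rfl

@[simp]
lemma rowSeries_neg_one : rowSeries f (-1) = 1 := if_pos rfl

lemma colSeries_of_lt_neg_one {a : ℤ} (ha : a < -1) : colSeries f a = 0 := by
  rw [colSeries, if_neg ha.ne, zeroExtend_of_neg_left f (by lia)]

lemma rowSeries_of_lt_neg_one {b : ℤ} (hb : b < -1) : rowSeries f b = 0 := by
  rw [rowSeries, if_neg hb.ne, zeroExtend_of_neg_right f _ (by lia)]

end Coefficients

lemma zeroExtend_add_one_left [MulZeroOneClass R] {f d : ℕ → ℕ → R}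
    (h : ∀ a b, d (a + 1) b = f a 0 * d 0 b) (a b : ℤ) :
    zeroExtend d (a + 1) b = colSeries f a * zeroExtend d 0 b := by
  rcases lt_or_ge b 0 with hb | hb
  · simp [zeroExtend_of_neg_right d _ hb]
  rcases lt_trichotomy a (-1) with ha | rfl | ha
  · rw [colSeries_of_lt_neg_one f ha, zeroExtend_of_neg_left d (by lia), zero_mul]
  · simp
  · lift a to ℕ using by lia
    lift b to ℕ using hb
    rw [colSeries_natCast]
    exact h a b

lemma zeroExtend_add_one_right [MulZeroOneClass R] {f d : ℕ → ℕ → R}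
    (h : ∀ a b, d a (b + 1) = d a 0 * f 0 b) (a b : ℤ) :
    zeroExtend d a (b + 1) = zeroExtend d a 0 * rowSeries f b := by
  rcases lt_or_ge a 0 with ha | ha
  · simp [zeroExtend_of_neg_left d ha]
  rcases lt_trichotomy b (-1) with hb | rfl | hb
  · rw [rowSeries_of_lt_neg_one f hb, zeroExtend_of_neg_right d _ (by lia), mul_zero]
  · simp
  · lift a to ℕ using ha
    lift b to ℕ using by lia
    rw [rowSeries_natCast]
    exact h a b

lemma zeroExtend_add_one_left_add_right [NonAssocRing R] {f : ℕ → ℕ → R}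
    (h : ∀ a b, f (a + 1) b + f a (b + 1) = f a 0 * f 0 b) (a b : ℤ) :
    zeroExtend f (a + 1) b + zeroExtend f a (b + 1)
      = colSeries f a * rowSeries f b - if a = -1 ∧ b = -1 then 1 else 0 := by
  rcases lt_trichotomy a (-1) with ha | rfl | ha
  · simp [colSeries_of_lt_neg_one f ha, ha.ne, zeroExtend_of_neg_left f (show a + 1 < 0 by lia),
      zeroExtend_of_neg_left f (show a < 0 by lia)]
  · by_cases hb : b = -1 <;>
      simp [hb, rowSeries, zeroExtend_of_neg_left f, zeroExtend_of_neg_right f]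
  rcases lt_trichotomy b (-1) with hb | rfl | hb
  · simp [rowSeries_of_lt_neg_one f hb, hb.ne, zeroExtend_of_neg_right f _ (show b < 0 by lia),
      zeroExtend_of_neg_right f _ (show b + 1 < 0 by lia)]
  · simp [colSeries, ha.ne', zeroExtend_of_neg_right f]
  · lift a to ℕ using by lia
    lift b to ℕ using by lia
    rw [colSeries_natCast, rowSeries_natCast, if_neg (by lia), sub_zero]
    exact h a b

end MasterEquations

section PartialDerivatives

-- Any norm on matrices would do: `pderM` only sees the entrywise topology.
open scoped Matrix.Norms.Operator

lemma differentiableAt_of_entries {E ι κ : Type*} [NormedAddCommGroup E] [NormedSpace ℝ E]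
    [Finite ι] [Finite κ] {F : E → Matrix ι κ ℂ} {x : E}
    (hF : ∀ i j, DifferentiableAt ℝ (fun y => F y i j) x) : DifferentiableAt ℝ F x := by
  cases nonempty_fintype ι
  cases nonempty_fintype κ
  exact differentiableAt_pi.2 fun i => differentiableAt_pi.2 (hF i)

variable {N m : ℕ} {F : (Fin N → ℝ) → Matrix (Fin m) (Fin m) ℂ} {x : Fin N → ℝ}

lemma pderM_eq_of_hasFDerivAt {F' : (Fin N → ℝ) →L[ℝ] Matrix (Fin m) (Fin m) ℂ}
    (hF : HasFDerivAt F F' x) (k : Fin N) : pderM k F x = F' (Pi.single k 1) := by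
  ext i j
  have hentry : HasFDerivAt (fun y => F y i j) _ x :=
    hasFDerivAt_pi'.1 (hasFDerivAt_pi'.1 hF i) j
  rw [pderM, Matrix.of_apply, hentry.fderiv]
  rfl

lemma pderM_const (k : Fin N) (C : Matrix (Fin m) (Fin m) ℂ) : pderM k (fun _ => C) x = 0 :=
  pderM_eq_of_hasFDerivAt (hasFDerivAt_const C x) k

lemma pderM_affine {G : (Fin N → ℝ) → Matrix (Fin m) (Fin m) ℂ}
    (hF : ∀ i j, DifferentiableAt ℝ (fun y => F y i j) x)
    (hG : ∀ i j, DifferentiableAt ℝ (fun y => G y i j) x)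
    (k : Fin N) (s C : Matrix (Fin m) (Fin m) ℂ) (c : ℂ) :
    pderM k (fun y => s * F y - c • (G y * s) + C) x
      = s * pderM k F x - c • (pderM k G x * s) := by
  have hF' := (differentiableAt_of_entries hF).hasFDerivAt
  have hG' := (differentiableAt_of_entries hG).hasFDerivAt
  rw [pderM_eq_of_hasFDerivAt hF', pderM_eq_of_hasFDerivAt hG']
  exact pderM_eq_of_hasFDerivAt
    (((hF'.const_mul s).sub ((hG'.mul_const' s).const_smul c)).add_const C) k

end PartialDerivatives

section Action

variable {N m : ℕ} {M : ℕ → ℕ → (Fin N → ℝ) → Matrix (Fin m) (Fin m) ℂ} {x : Fin N → ℝ} {l : ℕ}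

lemma lowAct_eq_zeroExtend (s : Matrix (Fin m) (Fin m) ℂ) (a b : ℕ) :
    lowAct s l M a b x
      = s * zeroExtend (M · · x) (a - l) b - (-1 : ℂ) ^ l • (zeroExtend (M · · x) a (b - l) * s)
        + (-1 : ℂ) ^ b • (if a + b + 1 = l then s else 0) := by
  simp only [lowAct, zeroExtend_natCast_sub_left, zeroExtend_natCast_sub_right, mul_ite, ite_mul,
    mul_zero, zero_mul]

lemma pderM_zeroExtend (k : Fin N) (a b : ℤ) :
    pderM k (zeroExtend M a b) x = zeroExtend (fun a b => pderM k (M a b) x) a b :=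
  map_zeroExtend (φ := fun F => pderM k F x) M (pderM_const k 0) a b

lemma differentiableAt_zeroExtend
    (hM : ∀ a b i j, DifferentiableAt ℝ (fun y => M a b y i j) x) (a b : ℤ) (i j : Fin m) :
    DifferentiableAt ℝ (fun y => zeroExtend M a b y i j) x := by
  cases a <;> cases b <;> first | exact hM _ _ i j | exact differentiableAt_const 0

lemma pderM_lowAct (hM : ∀ a b i j, DifferentiableAt ℝ (fun y => M a b y i j) x)
    (s : Matrix (Fin m) (Fin m) ℂ) (k : Fin N) (a b : ℕ) :
    pderM k (lowAct s l M a b) x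
      = s * zeroExtend (fun a b => pderM k (M a b) x) (a - l) b
        - (-1 : ℂ) ^ l • (zeroExtend (fun a b => pderM k (M a b) x) a (b - l) * s) := by
  have happly (y : Fin N → ℝ) (a b : ℤ) : zeroExtend (M · · y) a b = zeroExtend M a b y :=
    (map_zeroExtend (φ := fun F => F y) M rfl a b).symm
  have hlowAct : lowAct s l M a b = fun y => s * zeroExtend M (a - l) b y
      - (-1 : ℂ) ^ l • (zeroExtend M a (b - l) y * s)
      + (-1 : ℂ) ^ b • (if a + b + 1 = l then s else 0) := by
    funext y
    rw [lowAct_eq_zeroExtend, happly, happly]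
  rw [hlowAct, pderM_affine (differentiableAt_zeroExtend hM _ _)
    (differentiableAt_zeroExtend hM _ _), pderM_zeroExtend, pderM_zeroExtend]

lemma lowAct_zero_right (hl : 1 ≤ l) (s : Matrix (Fin m) (Fin m) ℂ) (a : ℕ) :
    lowAct s l M a 0 x = s * colSeries (M · · x) (a - l) := by
  have hneg : ((0 : ℕ) : ℤ) - l < 0 := by lia
  rw [lowAct_eq_zeroExtend, zeroExtend_of_neg_right _ _ hneg, colSeries]
  by_cases h : a + 1 = l
  · have hindex : (a : ℤ) - l = -1 := by lia
    simp [hindex, h, zeroExtend_of_neg_left]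
  · have hindex : (a : ℤ) - l ≠ -1 := by lia
    simp [hindex, h]

lemma lowAct_zero_left (hl : 1 ≤ l) (s : Matrix (Fin m) (Fin m) ℂ) (b : ℕ) :
    lowAct s l M 0 b x = -((-1 : ℂ) ^ l • (rowSeries (M · · x) (b - l) * s)) := by
  have hneg : ((0 : ℕ) : ℤ) - l < 0 := by lia
  rw [lowAct_eq_zeroExtend, zeroExtend_of_neg_left _ hneg, rowSeries]
  by_cases h : b + 1 = l
  · have hindex : (b : ℤ) - l = -1 := by lia
    have hsign : (-1 : ℂ) ^ l = -(-1) ^ b := by rw [← h, pow_succ, mul_neg_one]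
    simp [hindex, h, hsign, zeroExtend_of_neg_right]
  · have hindex : (b : ℤ) - l ≠ -1 := by lia
    simp [hindex, h]

lemma pderM_lowAct_add_one_left (hl : 1 ≤ l) {k : Fin N}
    (hM : ∀ a b i j, DifferentiableAt ℝ (fun y => M a b y i j) x)
    (hME1 : ∀ a b, pderM k (M (a + 1) b) x = M a 0 x * pderM k (M 0 b) x)
    (s : Matrix (Fin m) (Fin m) ℂ) (a b : ℕ) :
    pderM k (lowAct s l M (a + 1) b) x
      = lowAct s l M a 0 x * pderM k (M 0 b) x + M a 0 x * pderM k (lowAct s l M 0 b) x := by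
  have hneg : ((0 : ℕ) : ℤ) - l < 0 := by lia
  have hshift := zeroExtend_add_one_left (f := (M · · x)) (d := fun a b => pderM k (M a b) x) hME1
  rw [pderM_lowAct hM, pderM_lowAct hM, lowAct_zero_right hl, zeroExtend_of_neg_left _ hneg,
    Nat.cast_add_one, add_sub_right_comm, hshift, hshift]
  simp [mul_assoc, sub_eq_add_neg]

lemma pderM_lowAct_add_one_right (hl : 1 ≤ l) {k : Fin N}
    (hM : ∀ a b i j, DifferentiableAt ℝ (fun y => M a b y i j) x)
    (hME2 : ∀ a b, pderM k (M a (b + 1)) x = pderM k (M a 0) x * M 0 b x)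
    (s : Matrix (Fin m) (Fin m) ℂ) (a b : ℕ) :
    pderM k (lowAct s l M a (b + 1)) x
      = pderM k (lowAct s l M a 0) x * M 0 b x + pderM k (M a 0) x * lowAct s l M 0 b x := by
  have hneg : ((0 : ℕ) : ℤ) - l < 0 := by lia
  have hshift := zeroExtend_add_one_right (f := (M · · x)) (d := fun a b => pderM k (M a b) x) hME2
  rw [pderM_lowAct hM, pderM_lowAct hM, lowAct_zero_left hl, zeroExtend_of_neg_right _ _ hneg,
    Nat.cast_add_one, add_sub_right_comm, hshift, hshift]
  simp [mul_assoc, sub_eq_add_neg]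

lemma lowAct_add_one_left_add_right (hl : 1 ≤ l)
    (hME3 : ∀ a b, M (a + 1) b x + M a (b + 1) x = M a 0 x * M 0 b x)
    (s : Matrix (Fin m) (Fin m) ℂ) (a b : ℕ) :
    lowAct s l M (a + 1) b x + lowAct s l M a (b + 1) x
      = lowAct s l M a 0 x * M 0 b x + M a 0 x * lowAct s l M 0 b x := by
  let f : ℕ → ℕ → Matrix (Fin m) (Fin m) ℂ := (M · · x)
  have hshift := zeroExtend_add_one_left_add_right (f := f) hME3
  have hleft : zeroExtend f (a - l + 1) b + zeroExtend f (a - l) (b + 1)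
      = colSeries f (a - l) * f 0 b := by
    simpa [show (b : ℤ) ≠ -1 by lia] using hshift (a - l) b
  have hright : zeroExtend f (a + 1) (b - l) + zeroExtend f a (b - l + 1)
      = f a 0 * rowSeries f (b - l) := by
    simpa [show (a : ℤ) ≠ -1 by lia] using hshift a (b - l)
  have hconst : (-1 : ℂ) ^ b • (if a + 1 + b + 1 = l then s else 0)
      + (-1 : ℂ) ^ (b + 1) • (if a + (b + 1) + 1 = l then s else 0) = 0 := by
    rw [add_right_comm a 1 b, ← add_assoc, pow_succ, mul_neg_one, neg_smul, add_neg_cancel]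
  calc
    lowAct s l M (a + 1) b x + lowAct s l M a (b + 1) x
        = s * (zeroExtend f (a - l + 1) b + zeroExtend f (a - l) (b + 1))
          - (-1 : ℂ) ^ l •
            ((zeroExtend f (a + 1) (b - l) + zeroExtend f a (b - l + 1)) * s) := by
      rw [lowAct_eq_zeroExtend, lowAct_eq_zeroExtend, add_add_add_comm, hconst, add_zero,
        Nat.cast_add_one, Nat.cast_add_one, add_sub_right_comm, add_sub_right_comm, mul_add,
        add_mul, smul_add]
      abel
    _ = lowAct s l M a 0 x * M 0 b x + M a 0 x * lowAct s l M 0 b x := by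
      rw [hleft, hright, lowAct_zero_right hl, lowAct_zero_left hl]
      simp [f, mul_assoc, sub_eq_add_neg]

end Action

/-- The infinitesimal lower-triangular action preserves the master equations:
the linearized master equations hold for `M' := (s z^{−l}.M)`. -/
theorem lower_triangular_action_preserves_master_equations
    {m N : ℕ} (hm : 1 ≤ m) (hN : 1 ≤ N)
    (U : Set (Fin N → ℝ)) (hU : IsOpen U)
    (M : ℕ → ℕ → (Fin N → ℝ) → Matrix (Fin m) (Fin m) ℂ)
    (hsmooth : ∀ a b : ℕ, ∀ i j : Fin m, ContDiffOn ℝ 1 (fun x => M a b x i j) U)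
    (hME1 : ∀ a b : ℕ, ∀ k : Fin N, ∀ x ∈ U,
      pderM k (M (a + 1) b) x = M a 0 x * pderM k (M 0 b) x)
    (hME2 : ∀ a b : ℕ, ∀ k : Fin N, ∀ x ∈ U,
      pderM k (M a (b + 1)) x = pderM k (M a 0) x * M 0 b x)
    (hME3 : ∀ a b : ℕ, ∀ x ∈ U,
      M (a + 1) b x + M a (b + 1) x = M a 0 x * M 0 b x)
    (s : Matrix (Fin m) (Fin m) ℂ) (l : ℕ) (hl : 1 ≤ l)
    (M' : ℕ → ℕ → (Fin N → ℝ) → Matrix (Fin m) (Fin m) ℂ)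
    (hM' : ∀ a b x, M' a b x = lowAct s l M a b x) :
    (∀ a b : ℕ, ∀ k : Fin N, ∀ x ∈ U,
      pderM k (M' (a + 1) b) x
        = M' a 0 x * pderM k (M 0 b) x + M a 0 x * pderM k (M' 0 b) x) ∧
    (∀ a b : ℕ, ∀ k : Fin N, ∀ x ∈ U,
      pderM k (M' a (b + 1)) x
        = pderM k (M' a 0) x * M 0 b x + pderM k (M a 0) x * M' 0 b x) ∧
    (∀ a b : ℕ, ∀ x ∈ U,
      M' (a + 1) b x + M' a (b + 1) x
        = M' a 0 x * M 0 b x + M a 0 x * M' 0 b x) := by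
  obtain rfl : M' = lowAct s l M := by
    funext a b x
    exact hM' a b x
  have hM (x) (hx : x ∈ U) (a b i j) : DifferentiableAt ℝ (fun y => M a b y i j) x :=
    ((hsmooth a b i j).differentiableOn one_ne_zero).differentiableAt (hU.mem_nhds hx)
  exact ⟨
    fun a b k x hx => pderM_lowAct_add_one_left hl (hM x hx) (hME1 · · k x hx) s a b,
    fun a b k x hx => pderM_lowAct_add_one_right hl (hM x hx) (hME2 · · k x hx) s a b,
    fun a b x hx => lowAct_add_one_left_add_right hl (hME3 · · x hx) s a b⟩
end

section
/- Let M_{a,b} : U → Mat_{m×m}(ℂ), a, b ≥ 0, be continuously differentiable functions on an open subset U ⊆ ℝ^N. For a finitely supported sequence q = (q_0, q_1, q_2, …) of vectors in ℂ^m, set Q(q) := q_0 + Σ_{i≥0} M_{0,i}·q_{i+1}. Then the following are equivalent: (a) the family (M_{a,b}) satisfies the three master equations; (b) for every a ≥ 0, every k ∈ {1,…,N}, and every finitely supported sequence q: M_{a,0}·q_0 + Σ_{i≥0} (M_{a+1,i} + M_{a,i+1})·q_{i+1} = M_{a,0}·Q(q), and Σ_{i≥0} (∂_k M_{a,i})·q_i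 = (∂_k M_{a,0})·Q(q). -/
/-- `Q(q) = q₀ + Σ_{i≥0} M_{0,i}·q_{i+1}` for a finitely supported sequence `q`. -/
noncomputable def Qmap {N m : ℕ}
    (M : ℕ → ℕ → (Fin N → ℝ) → Matrix (Fin m) (Fin m) ℂ)
    (x : Fin N → ℝ) (q : ℕ →₀ (Fin m → ℂ)) : Fin m → ℂ :=
  q 0 + ∑ᶠ i : ℕ, Matrix.mulVec (M 0 i x) (q (i + 1))

open Function Matrix Topology

section FiniteSums

lemma finsum_nat_eq_zero_add {V : Type*} [AddCommMonoid V] {f : ℕ → V} (hf : f.HasFiniteSupport) :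
    ∑ᶠ i, f i = f 0 + ∑ᶠ i, f (i + 1) := by
  have hrange : insert 0 (Set.range Nat.succ) = Set.univ := Nat.zero_union_range_succ
  rw [← finsum_mem_univ, ← hrange,
    finsum_mem_insert' f (by simp) (hf.subset Set.inter_subset_right),
    finsum_mem_range Nat.succ_injective]

variable {ι κ m n R : Type*} [Fintype n] [NonUnitalNonAssocSemiring R]

lemma hasFiniteSupport_mulVec_comp (A : ι → Matrix m n R) (q : κ →₀ n → R) {σ : ι → κ}
    (hσ : Injective σ) : (fun i => A i *ᵥ q (σ i)).HasFiniteSupport := by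
  refine (q.hasFiniteSupport.preimage hσ.injOn).subset fun i hi hq => hi ?_
  simp [show q (σ i) = 0 from hq]

lemma mulVec_finsum (B : Matrix m n R) {f : ι → n → R} (hf : f.HasFiniteSupport) :
    B *ᵥ ∑ᶠ i, f i = ∑ᶠ i, B *ᵥ f i :=
  AddMonoidHom.map_finsum ⟨⟨(B *ᵥ ·), mulVec_zero B⟩, mulVec_add B⟩ hf

end FiniteSums

section LoopSpace

variable {m n R : Type*} [Fintype n]

/-- The map `Q(q) = q₀ + Σ_{i≥0} A_i q_{i+1}` on loop space, for an arbitrary sequence of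
coefficients `A_i`; `Qmap` is the case `A_i = M_{0,i}`. It restricts to the identity on constant
loops `q = (q₀, 0, 0, …)`, whence the name. -/
noncomputable def loopRetraction [NonUnitalNonAssocSemiring R] (A : ℕ → Matrix n n R)
    (q : ℕ →₀ n → R) : n → R :=
  q 0 + ∑ᶠ i, A i *ᵥ q (i + 1)

lemma mulVec_loopRetraction [NonUnitalSemiring R] (B : Matrix m n R) (A : ℕ → Matrix n n R)
    (q : ℕ →₀ n → R) :
    B *ᵥ loopRetraction A q = B *ᵥ q 0 + ∑ᶠ i, (B * A i) *ᵥ q (i + 1) := by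
  simp only [loopRetraction, mulVec_add,
    mulVec_finsum B (hasFiniteSupport_mulVec_comp A q (add_left_injective 1)), mulVec_mulVec]

lemma mulVec_add_finsum_mulVec_ext_iff [NonAssocSemiring R] (B : Matrix m n R)
    {C D : ℕ → Matrix m n R} :
    (∀ q : ℕ →₀ n → R,
      B *ᵥ q 0 + ∑ᶠ i, C i *ᵥ q (i + 1) = B *ᵥ q 0 + ∑ᶠ i, D i *ᵥ q (i + 1)) ↔
      ∀ i, C i = D i := by
  classical
  refine ⟨fun h b => ext_of_mulVec_single fun j => ?_, fun h q => by simp only [h]⟩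
  have eval_single (A : ℕ → Matrix m n R) (w : n → R) :
      B *ᵥ Finsupp.single (b + 1) w 0 + ∑ᶠ i, A i *ᵥ Finsupp.single (b + 1) w (i + 1)
        = A b *ᵥ w := by
    rw [finsum_eq_single _ b fun i hi => by simp [hi.symm]]
    simp
  simpa only [eval_single] using h (Finsupp.single (b + 1) (Pi.single j 1))

variable [Semiring R] (A : ℕ → Matrix n n R)

lemma mulVec_add_finsum_eq_mulVec_loopRetraction_iff (B : Matrix m n R) (C : ℕ → Matrix m n R) :
    (∀ q, B *ᵥ q 0 + ∑ᶠ i, C i *ᵥ q (i + 1) = B *ᵥ loopRetraction A q) ↔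
      ∀ i, C i = B * A i := by
  simp only [mulVec_loopRetraction]
  exact mulVec_add_finsum_mulVec_ext_iff B

lemma finsum_mulVec_eq_mulVec_loopRetraction_iff (C : ℕ → Matrix m n R) :
    (∀ q, ∑ᶠ i, C i *ᵥ q i = C 0 *ᵥ loopRetraction A q) ↔ ∀ i, C (i + 1) = C 0 * A i := by
  have split (q : ℕ →₀ n → R) :
      ∑ᶠ i, C i *ᵥ q i = C 0 *ᵥ q 0 + ∑ᶠ i, C (i + 1) *ᵥ q (i + 1) :=
    finsum_nat_eq_zero_add (hasFiniteSupport_mulVec_comp C q injective_id)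
  simp only [split]
  exact mulVec_add_finsum_eq_mulVec_loopRetraction_iff A (C 0) fun i => C (i + 1)

end LoopSpace

section Derivative

variable {𝕜 E R l m n : Type*} [NontriviallyNormedField 𝕜] [NormedAddCommGroup E] [NormedSpace 𝕜 E]

variable (𝕜) in
/-- The derivative of a matrix-valued function `M` at `x` in the direction `v`, taken entry by
entry so that no norm on matrices has to be chosen; `pderM k` is the case `v = e_k`. Like `fderiv`,
an entry has the junk value `0` where `M` fails to be differentiable. -/
noncomputable def entrywiseFDeriv [NormedAddCommGroup R] [NormedSpace 𝕜 R] (v : E)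
    (M : E → Matrix m n R) (x : E) : Matrix m n R :=
  of fun i j => fderiv 𝕜 (fun y => M y i j) x v

lemma entrywiseFDeriv_add [NormedAddCommGroup R] [NormedSpace 𝕜 R] {F G : E → Matrix m n R}
    {x : E} (hF : ∀ i j, DifferentiableAt 𝕜 (fun y => F y i j) x)
    (hG : ∀ i j, DifferentiableAt 𝕜 (fun y => G y i j) x) (v : E) :
    entrywiseFDeriv 𝕜 v (fun y => F y + G y) x
      = entrywiseFDeriv 𝕜 v F x + entrywiseFDeriv 𝕜 v G x := by
  ext i j
  simp [entrywiseFDeriv, fderiv_fun_add (hF i j) (hG i j)]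

lemma entrywiseFDeriv_congr_of_eventuallyEq [NormedAddCommGroup R] [NormedSpace 𝕜 R]
    {F G : E → Matrix m n R} {x : E} (h : F =ᶠ[𝓝 x] G) (v : E) :
    entrywiseFDeriv 𝕜 v F x = entrywiseFDeriv 𝕜 v G x := by
  ext i j
  have hij : (fun y => F y i j) =ᶠ[𝓝 x] fun y => G y i j := h.fun_comp fun X => X i j
  simp only [entrywiseFDeriv, of_apply, hij.fderiv_eq]

variable [Fintype n] [NormedRing R] [NormedAlgebra 𝕜 R]

lemma entrywiseFDeriv_mul {F : E → Matrix m n R} {G : E → Matrix n l R} {x : E}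
    (hF : ∀ i j, DifferentiableAt 𝕜 (fun y => F y i j) x)
    (hG : ∀ i j, DifferentiableAt 𝕜 (fun y => G y i j) x) (v : E) :
    entrywiseFDeriv 𝕜 v (fun y => F y * G y) x
      = entrywiseFDeriv 𝕜 v F x * G x + F x * entrywiseFDeriv 𝕜 v G x := by
  ext i j
  simp only [entrywiseFDeriv, of_apply, Matrix.add_apply, mul_apply]
  rw [fderiv_fun_sum fun p _ => (hF i p).fun_mul (hG p j), ← Finset.sum_add_distrib]
  simp [fderiv_fun_mul' (hF i _) (hG _ j), add_comm]

lemma entrywiseFDeriv_eq_mul_of_add_eventuallyEq_mul {A B : E → Matrix m l R}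
    {F : E → Matrix m n R} {G : E → Matrix n l R} {x v : E}
    (hA : ∀ i j, DifferentiableAt 𝕜 (fun y => A y i j) x)
    (hB : ∀ i j, DifferentiableAt 𝕜 (fun y => B y i j) x)
    (hF : ∀ i j, DifferentiableAt 𝕜 (fun y => F y i j) x)
    (hG : ∀ i j, DifferentiableAt 𝕜 (fun y => G y i j) x)
    (hsum : (fun y => A y + B y) =ᶠ[𝓝 x] fun y => F y * G y)
    (hBv : entrywiseFDeriv 𝕜 v B x = entrywiseFDeriv 𝕜 v F x * G x) :
    entrywiseFDeriv 𝕜 v A x = F x * entrywiseFDeriv 𝕜 v G x := by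
  have leibniz := entrywiseFDeriv_congr_of_eventuallyEq (𝕜 := 𝕜) hsum v
  rw [entrywiseFDeriv_add hA hB, entrywiseFDeriv_mul hF hG, hBv, add_comm] at leibniz
  exact add_left_cancel leibniz

end Derivative

theorem master_equations_iff_loop_space_condition_general
    {𝕜 E R n ι : Type*} [NontriviallyNormedField 𝕜] [NormedAddCommGroup E] [NormedSpace 𝕜 E]
    [NormedRing R] [NormedAlgebra 𝕜 R] [Fintype n] [Nonempty ι] {v : ι → E}
    {U : Set E} (hU : IsOpen U) (M : ℕ → ℕ → E → Matrix n n R)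
    (hM : ∀ a b i j, DifferentiableOn 𝕜 (fun x => M a b x i j) U) :
    ((∀ a b k, ∀ x ∈ U, entrywiseFDeriv 𝕜 (v k) (M (a + 1) b) x
        = M a 0 x * entrywiseFDeriv 𝕜 (v k) (M 0 b) x) ∧
     (∀ a b k, ∀ x ∈ U, entrywiseFDeriv 𝕜 (v k) (M a (b + 1)) x
        = entrywiseFDeriv 𝕜 (v k) (M a 0) x * M 0 b x) ∧
     (∀ a b, ∀ x ∈ U, M (a + 1) b x + M a (b + 1) x = M a 0 x * M 0 b x))
    ↔
    (∀ a k, ∀ x ∈ U, ∀ q : ℕ →₀ n → R,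
      (M a 0 x *ᵥ q 0 + ∑ᶠ i, (M (a + 1) i x + M a (i + 1) x) *ᵥ q (i + 1)
        = M a 0 x *ᵥ loopRetraction (fun i => M 0 i x) q) ∧
      (∑ᶠ i, entrywiseFDeriv 𝕜 (v k) (M a i) x *ᵥ q i
        = entrywiseFDeriv 𝕜 (v k) (M a 0) x *ᵥ loopRetraction (fun i => M 0 i x) q)) := by
  simp only [forall_and, mulVec_add_finsum_eq_mulVec_loopRetraction_iff,
    finsum_mulVec_eq_mulVec_loopRetraction_iff _ fun i => entrywiseFDeriv 𝕜 (v _) (M _ i) _]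
  have hdiff (a b x) (hx : x ∈ U) (i j) : DifferentiableAt 𝕜 (fun y => M a b y i j) x :=
    (hM a b i j).differentiableAt (hU.mem_nhds hx)
  constructor
  · rintro ⟨-, me2, me3⟩
    exact ⟨fun a _ x hx b => me3 a b x hx, fun a k x hx b => me2 a b k x hx⟩
  · rintro ⟨me3, me2⟩
    obtain ⟨k₀⟩ := ‹Nonempty ι›
    refine ⟨fun a b k x hx => ?_, fun a b k x hx => me2 a k x hx b,
      fun a b x hx => me3 a k₀ x hx b⟩
    have me3_near : (fun y => M (a + 1) b y + M a (b + 1) y) =ᶠ[𝓝 x] fun y => M a 0 y * M 0 b y :=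
      Filter.eventuallyEq_of_mem (hU.mem_nhds hx) fun y hy => me3 a k₀ y hy b
    exact entrywiseFDeriv_eq_mul_of_add_eventuallyEq_mul (hdiff _ _ x hx) (hdiff _ _ x hx)
      (hdiff _ _ x hx) (hdiff _ _ x hx) me3_near (me2 a k x hx b)

/-- Linear-algebraic characterization of the master equations: for a continuously
differentiable family `(M_{a,b})` on an open `U ⊆ ℝ^N`, the three master equations
hold iff for every `a`, `k`, and every finitely supported sequence `q`,
`M_{a,0}·q₀ + Σ_i (M_{a+1,i} + M_{a,i+1})·q_{i+1} = M_{a,0}·Q(q)` and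
`Σ_i (∂ₖM_{a,i})·q_i = (∂ₖM_{a,0})·Q(q)`. -/
theorem master_equations_iff_loop_space_condition
    {m N : ℕ} (hm : 1 ≤ m) (hN : 1 ≤ N)
    (U : Set (Fin N → ℝ)) (hU : IsOpen U)
    (M : ℕ → ℕ → (Fin N → ℝ) → Matrix (Fin m) (Fin m) ℂ)
    (hsmooth : ∀ a b : ℕ, ∀ i j : Fin m, ContDiffOn ℝ 1 (fun x => M a b x i j) U) :
    ((∀ a b : ℕ, ∀ k : Fin N, ∀ x ∈ U,
        pderM k (M (a + 1) b) x = M a 0 x * pderM k (M 0 b) x) ∧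
     (∀ a b : ℕ, ∀ k : Fin N, ∀ x ∈ U,
        pderM k (M a (b + 1)) x = pderM k (M a 0) x * M 0 b x) ∧
     (∀ a b : ℕ, ∀ x ∈ U,
        M (a + 1) b x + M a (b + 1) x = M a 0 x * M 0 b x))
    ↔
    (∀ a : ℕ, ∀ k : Fin N, ∀ x ∈ U, ∀ q : ℕ →₀ (Fin m → ℂ),
      (Matrix.mulVec (M a 0 x) (q 0)
          + ∑ᶠ i : ℕ, Matrix.mulVec (M (a + 1) i x + M a (i + 1) x) (q (i + 1))
        = Matrix.mulVec (M a 0 x) (Qmap M x q)) ∧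
      (∑ᶠ i : ℕ, Matrix.mulVec (pderM k (M a i) x) (q i)
        = Matrix.mulVec (pderM k (M a 0) x) (Qmap M x q))) :=
  haveI : Nonempty (Fin N) := ⟨⟨0, hN⟩⟩
  master_equations_iff_loop_space_condition_general (𝕜 := ℝ) (v := fun k : Fin N => Pi.single k 1)
    hU M fun a b i j => (hsmooth a b i j).differentiableOn one_ne_zero
end

section
/- Let K be a field of characteristic zero, let λ ∈ K[t_1,…,t_N] be a nonzero homogeneous polynomial of degree 1, and let P ∈ K[t_1,…,t_N] be homogeneous of degree d ≥ 0 such that (∂_i λ)·(∂_j P) = (∂_j λ)·(∂_i P) for all i, j ∈ {1,…,N} (i.e. dλ ∧ dP = 0). Then there exists a constant c ∈ K with P = c·λ^d. -/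
/-!
Since `λ` is a nonzero linear form, its partial derivatives are constants and some `∂ₖλ` is nonzero.
Differentiating the equations `∂ᵢλ ∂ⱼP = ∂ⱼλ ∂ᵢP` shows that `∂ₖP` satisfies them too, so induction
on the degree gives `∂ₖP = c λ^d`. Subtracting from `P` the multiple of `λ^(d+1)` with the same `∂ₖ`
leaves a form `Q` of degree `d + 1` with `dλ ∧ dQ = 0` and `∂ₖQ = 0`. Hence `dQ = 0`, and `Q = 0` by
Euler's identity. The integers by which one divides along the way are the factors of `d!`.
-/

section

open MvPolynomial

variable {σ R : Type*}

section CommSemiring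

variable [CommSemiring R] {f g : MvPolynomial σ R}

lemma pderiv_pderiv_comm (i j : σ) (f : MvPolynomial σ R) :
    pderiv i (pderiv j f) = pderiv j (pderiv i f) := by
  ext m
  obtain rfl | hij := eq_or_ne i j
  · rfl
  · simp only [coeff_pderiv, Finsupp.add_apply, Finsupp.single_eq_of_ne hij,
      Finsupp.single_eq_of_ne hij.symm, add_zero]
    rw [add_right_comm, mul_right_comm]

lemma coeff_X_mul_pderiv (i : σ) (f : MvPolynomial σ R) (m : σ →₀ ℕ) :
    coeff m (X i * pderiv i f) = m i * coeff m f := by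
  induction f using MvPolynomial.induction_on' with
  | monomial n a =>
    classical
    rw [X_mul_pderiv_monomial, coeff_smul, coeff_monomial, nsmul_eq_mul]
    split_ifs with hnm
    · rw [hnm]
    · rw [mul_zero, mul_zero]
  | add p q hp hq => rw [map_add, mul_add, coeff_add, hp, hq, coeff_add, mul_add]

lemma eq_zero_of_isHomogeneous_of_forall_pderiv_eq_zero [NoZeroDivisors R] {n : ℕ}
    (hf : f.IsHomogeneous n) (hn : (n : R) ≠ 0) (hderiv : ∀ i, pderiv i f = 0) : f = 0 := by
  ext m
  by_contra hm
  have hdegree : m.degree = n := of_not_not fun h ↦ hm (hf.coeff_eq_zero h)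
  have heuler : (n : R) * coeff m f = 0 := by
    rw [← hdegree, Finsupp.degree_apply, Nat.cast_sum, Finset.sum_mul]
    refine Finset.sum_eq_zero fun i _ ↦ ?_
    rw [← coeff_X_mul_pderiv, hderiv, mul_zero, coeff_zero]
  exact hm ((mul_eq_zero.mp heuler).resolve_left hn)

lemma exists_pderiv_ne_zero_of_isHomogeneous_one [NoZeroDivisors R]
    (hf : f.IsHomogeneous 1) (hf_ne : f ≠ 0) : ∃ k, pderiv k f ≠ 0 := by
  by_contra! hderiv
  refine hf_ne ?_
  nontriviality R
  exact eq_zero_of_isHomogeneous_of_forall_pderiv_eq_zero hf (by simp) hderiv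

lemma isHomogeneous_zero_iff_eq_C : f.IsHomogeneous 0 ↔ f = C (coeff 0 f) := by
  rw [← totalDegree_zero_iff_isHomogeneous, totalDegree_eq_zero_iff_eq_C]

lemma pderiv_eq_C_coeff_of_isHomogeneous_one (hf : f.IsHomogeneous 1) (i : σ) :
    pderiv i f = C (coeff (Finsupp.single i 1) f) := by
  simpa [coeff_pderiv] using isHomogeneous_zero_iff_eq_C.mp (hf.pderiv (i := i))

/-- The condition `df ∧ dg = 0` on the differentials of two polynomials, encoded as the vanishing
of all `2 × 2` minors of the Jacobian matrix of `(f, g)`. -/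
def WedgeDiffEqZero (f g : MvPolynomial σ R) : Prop :=
  ∀ i j, pderiv i f * pderiv j g = pderiv j f * pderiv i g

namespace WedgeDiffEqZero

lemma pderiv_right (h : WedgeDiffEqZero f g) {k : σ} (hf : ∀ i, pderiv k (pderiv i f) = 0) :
    WedgeDiffEqZero f (pderiv k g) := by
  intro i j
  have hderiv := congrArg (pderiv k) (h i j)
  simp only [pderiv_mul, hf, zero_mul, zero_add] at hderiv
  rwa [pderiv_pderiv_comm j k, pderiv_pderiv_comm i k]

lemma self_C_mul_pow (f : MvPolynomial σ R) (c : R) (n : ℕ) :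
    WedgeDiffEqZero f (C c * f ^ n) := by
  intro i j
  rw [pderiv_C_mul, pderiv_C_mul, pderiv_pow, pderiv_pow]
  ring

lemma pderiv_right_eq_zero [NoZeroDivisors R] (h : WedgeDiffEqZero f g) {k : σ}
    (hf : pderiv k f ≠ 0) (hg : pderiv k g = 0) (i : σ) : pderiv i g = 0 := by
  have hmul : pderiv k f * pderiv i g = 0 := by rw [h k i, hg, mul_zero]
  exact (mul_eq_zero.mp hmul).resolve_left hf

end WedgeDiffEqZero

end CommSemiring

namespace WedgeDiffEqZero

lemma sub_right [CommRing R] {f g h : MvPolynomial σ R} (hg : WedgeDiffEqZero f g)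
    (hh : WedgeDiffEqZero f h) : WedgeDiffEqZero f (g - h) := by
  intro i j
  rw [map_sub, map_sub, mul_sub, mul_sub, hg i j, hh i j]

lemma eq_of_pderiv_eq [CommRing R] [NoZeroDivisors R] {f g h : MvPolynomial σ R} {n : ℕ} {k : σ}
    (hg : WedgeDiffEqZero f g) (hh : WedgeDiffEqZero f h) (hg_hom : g.IsHomogeneous n)
    (hh_hom : h.IsHomogeneous n) (hn : (n : R) ≠ 0) (hf : pderiv k f ≠ 0)
    (hgh : pderiv k g = pderiv k h) : g = h := by
  have hderiv : ∀ i, pderiv i (g - h) = 0 :=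
    (hg.sub_right hh).pderiv_right_eq_zero hf (by rw [map_sub, hgh, sub_self])
  exact sub_eq_zero.mp
    (eq_zero_of_isHomogeneous_of_forall_pderiv_eq_zero (hg_hom.sub hh_hom) hn hderiv)

lemma exists_eq_C_mul_pow_succ {K : Type*} [Field K] {lam P : MvPolynomial σ K} {d : ℕ} {k : σ}
    {a c : K} (hwedge : WedgeDiffEqZero lam P) (hlam : lam.IsHomogeneous 1)
    (hP : P.IsHomogeneous (d + 1)) (hd : ((d + 1 : ℕ) : K) ≠ 0) (ha : a ≠ 0)
    (hlam_k : pderiv k lam = C a) (hP_k : pderiv k P = C c * lam ^ d) :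
    ∃ b : K, P = C b * lam ^ (d + 1) := by
  set b : K := c / ((d + 1 : ℕ) * a)
  have hb : b * ((d + 1 : ℕ) * a) = c := div_mul_cancel₀ c (mul_ne_zero hd ha)
  have hpow : (C b * lam ^ (d + 1)).IsHomogeneous (d + 1) := by
    simpa only [one_mul] using (hlam.pow (d + 1)).C_mul b
  refine ⟨b, hwedge.eq_of_pderiv_eq (self_C_mul_pow lam b (d + 1)) hP hpow hd (k := k) ?_ ?_⟩
  · rwa [hlam_k, C_ne_zero]
  · rw [hP_k, pderiv_C_mul, pderiv_pow, hlam_k, Nat.add_sub_cancel, ← hb, C_mul, C_mul,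
      map_natCast]
    ring

end WedgeDiffEqZero

theorem homogeneous_wedge_zero_is_power_of_linear_form_general {K : Type*} [Field K]
    {lam P : MvPolynomial σ K} (hlam_ne : lam ≠ 0) (hlam : lam.IsHomogeneous 1)
    {d : ℕ} (hd : (d.factorial : K) ≠ 0) (hP : P.IsHomogeneous d)
    (hwedge : WedgeDiffEqZero lam P) : ∃ c : K, P = C c * lam ^ d := by
  obtain ⟨k, hk⟩ := exists_pderiv_ne_zero_of_isHomogeneous_one hlam hlam_ne
  have hconst := pderiv_eq_C_coeff_of_isHomogeneous_one hlam
  rw [hconst, C_ne_zero] at hk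
  induction d generalizing P with
  | zero => exact ⟨coeff 0 P, by simpa using isHomogeneous_zero_iff_eq_C.mp hP⟩
  | succ d ih =>
    rw [Nat.factorial_succ, Nat.cast_mul, mul_ne_zero_iff] at hd
    obtain ⟨hd_succ, hd_factorial⟩ := hd
    have hwedge_k : WedgeDiffEqZero lam (pderiv k P) :=
      hwedge.pderiv_right fun i ↦ by rw [hconst, pderiv_C]
    obtain ⟨c, hc⟩ := ih hd_factorial hP.pderiv hwedge_k
    exact hwedge.exists_eq_C_mul_pow_succ hlam hP hd_succ hk (hconst k) hc

end

/-- If `λ` is a nonzero homogeneous degree-1 polynomial and `P` is homogeneous of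
degree `d` over a field of characteristic zero, and `dλ ∧ dP = 0`
(`(∂ᵢλ)(∂ⱼP) = (∂ⱼλ)(∂ᵢP)` for all `i, j`), then `P = c·λ^d` for some constant `c`. -/
theorem homogeneous_wedge_zero_is_power_of_linear_form
    (K : Type*) [Field K] [CharZero K] (N : ℕ)
    (lam P : MvPolynomial (Fin N) K)
    (hlam_ne : lam ≠ 0) (hlam : lam.IsHomogeneous 1)
    (d : ℕ) (hP : P.IsHomogeneous d)
    (hwedge : ∀ i j : Fin N,
      MvPolynomial.pderiv i lam * MvPolynomial.pderiv j P
        = MvPolynomial.pderiv j lam * MvPolynomial.pderiv i P) :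
    ∃ c : K, P = MvPolynomial.C c * lam ^ d := by
  exact homogeneous_wedge_zero_is_power_of_linear_form_general hlam_ne hlam
    (mod_cast d.factorial_ne_zero) hP hwedge
end

section
/- Let A = ℂ[p_{a,μ}, q_b^ν : a, b ∈ ℕ, μ, ν ∈ {1,…,m}] be the polynomial ring in the displayed countable family of variables. For s ∈ Mat_{m×m}(ℂ) and an integer l ≥ 1, let ŝ(s,l) : A → A be the ℂ-linear operator D_{s,l} + (multiplication by P_{s,l}), where D_{s,l} is the unique ℂ-derivation of A with D_{s,l}(p_{a,μ}) = Σ_ν s_{νμ}·p_{a+l,ν} and D_{s,l}(q_b^μ) = −(−1)^l·Σ_ν s_{μν}·q_{b+l}^ν, and P_{s,l} := Σ_{i+j=l−1, i,j≥0} (−1)^j Σ_{μ,ν} s_{μν}·p_{i,μ}·q_j^ν ∈ A. Then for all s, s' ∈ Mat_{m×m}(ℂ) and all integers l, l' ≥ 1: ŝ(s,l) ∘ ŝ(s',l') − ŝ(s',l') ∘ ŝ(s,l) = ŝ(s·s' − s'·s, l + l'). -/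
/-- Variables of the polynomial ring `ℂ[p_{a,μ}, q_b^ν]`: `inl (a, μ)` is `p_{a,μ}`,
`inr (b, ν)` is `q_b^ν`. -/
abbrev PQVar (m : ℕ) := (ℕ × Fin m) ⊕ (ℕ × Fin m)

/-- The polynomial ring `A = ℂ[p_{a,μ}, q_b^ν : a, b ∈ ℕ, μ, ν ∈ {1,…,m}]`. -/
abbrev PolyA (m : ℕ) := MvPolynomial (PQVar m) ℂ

/-- The derivation `D_{s,l}` with `D(p_{a,μ}) = Σ_ν s_{νμ}·p_{a+l,ν}` and
`D(q_b^μ) = −(−1)^l·Σ_ν s_{μν}·q_{b+l}^ν`. -/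
noncomputable def Dsl {m : ℕ} (s : Matrix (Fin m) (Fin m) ℂ) (l : ℕ) :
    Derivation ℂ (PolyA m) (PolyA m) :=
  MvPolynomial.mkDerivation ℂ fun v =>
    match v with
    | .inl (a, μ) => ∑ ν : Fin m, s ν μ • MvPolynomial.X (.inl (a + l, ν))
    | .inr (b, μ) => -(-1 : ℂ) ^ l • ∑ ν : Fin m, s μ ν • MvPolynomial.X (.inr (b + l, ν))

/-- The polynomial `P_{s,l} = Σ_{i+j=l−1} (−1)^j Σ_{μ,ν} s_{μν}·p_{i,μ}·q_j^ν`. -/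
noncomputable def Psl {m : ℕ} (s : Matrix (Fin m) (Fin m) ℂ) (l : ℕ) : PolyA m :=
  ∑ i ∈ Finset.range l, (-1 : ℂ) ^ (l - 1 - i) •
    ∑ μ : Fin m, ∑ ν : Fin m,
      s μ ν • (MvPolynomial.X (.inl (i, μ)) * MvPolynomial.X (.inr (l - 1 - i, ν)))

/-- The quantization `ŝ(s,l) = D_{s,l} + (multiplication by P_{s,l})` of the
lower-triangular element `s·z^{−l}`. -/
noncomputable def shat {m : ℕ} (s : Matrix (Fin m) (Fin m) ℂ) (l : ℕ) :
    PolyA m → PolyA m :=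
  fun f => Dsl s l f + Psl s l * f

/-!
Collect the generators into vectors `p_a` and `q_b` over `A`. Then `D_{s,l}` sends the row vector
`p_a` to `p_{a+l} s` and the column vector `q_b` to `-(-1)^l s q_{b+l}`, and `P_{s,l}` is the sum of
`(-1)^j p_i s q_j` over `i + j = l - 1`.

The commutator of two operators `D + P` and `D' + P'` is `[D, D'] + (D P' - D' P)`. On the vectors
of generators, `[D_{s,l}, D_{s',l'}] = D_{[s,s'],l+l'}` is associativity of the matrix product. By
the Leibniz rule `D_{s,l}(p_i s' q_j) = p_{i+l} (s s') q_j - (-1)^l p_i (s' s) q_{j+l}`, so the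
terms of `D P' - D' P` containing `s s'` are those of `P_{s s',l+l'}`: the ones in which the index
of `p` is at least `l` come from `D P'`, the others from `D' P`. Symmetrically, those containing
`s' s` are the terms of `-P_{s' s,l+l'}`, cut at `l'`.
-/

open Matrix
open MvPolynomial (X mkDerivation_X)

section Derivation

variable {R A m n : Type*} [CommSemiring R] [CommSemiring A] [Algebra R A]

lemma derivation_comp_smul {M : Type*} [AddCommMonoid M] [Module R M] [Module A M]
    (D : Derivation R A M) (c : R) (v : n → A) : D ∘ (c • v) = c • (D ∘ v) :=
  funext fun i => D.map_smul c (v i)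

variable (D : Derivation R A A)

lemma derivation_comp_mulVec [Fintype n] (M : Matrix m n R) (v : n → A) :
    D ∘ (M.map (algebraMap R A) *ᵥ v) = M.map (algebraMap R A) *ᵥ (D ∘ v) := by
  ext i
  simp [mulVec, dotProduct, ← Algebra.smul_def]

lemma derivation_comp_vecMul [Fintype m] (v : m → A) (M : Matrix m n R) :
    D ∘ (v ᵥ* M.map (algebraMap R A)) = (D ∘ v) ᵥ* M.map (algebraMap R A) := by
  rw [← mulVec_transpose, ← mulVec_transpose, ← transpose_map, derivation_comp_mulVec]

lemma derivation_dotProduct [Fintype n] (v w : n → A) :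
    D (v ⬝ᵥ w) = (D ∘ v) ⬝ᵥ w + v ⬝ᵥ (D ∘ w) := by
  simp only [dotProduct, map_sum, Derivation.leibniz, smul_eq_mul, Function.comp_apply,
    ← Finset.sum_add_distrib]
  exact Finset.sum_congr rfl fun i _ => by ring

end Derivation

lemma derivation_add_mul_commutator {R A : Type*} [CommRing R] [CommRing A] [Algebra R A]
    (D D' : Derivation R A A) (P P' f : A) :
    (D (D' f + P' * f) + P * (D' f + P' * f)) - (D' (D f + P * f) + P' * (D f + P * f)) =
      ⁅D, D'⁆ f + (D P' - D' P) * f := by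
  simp only [map_add, Derivation.leibniz, smul_eq_mul, Derivation.commutator_apply]
  ring

section Quantization

variable {m : ℕ}

/-- The vector `p_a = (p_{a,μ})_μ` of generators, thought of as a row vector. -/
noncomputable def pVec (a : ℕ) : Fin m → PolyA m := fun μ => X (.inl (a, μ))

/-- The vector `q_b = (q_b^ν)_ν` of generators, thought of as a column vector. -/
noncomputable def qVec (b : ℕ) : Fin m → PolyA m := fun ν => X (.inr (b, ν))

/-- The bilinear form `p_i s q_j = Σ_{μ,ν} s_{μν} p_{i,μ} q_j^ν`; `P_{s,l}` is an alternating sum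
of these. -/
noncomputable def pqForm (s : Matrix (Fin m) (Fin m) ℂ) (i j : ℕ) : PolyA m :=
  pVec i ⬝ᵥ s.map (algebraMap ℂ (PolyA m)) *ᵥ qVec j

lemma derivation_ext_pVec_qVec {M : Type*} [AddCommMonoid M] [Module ℂ M] [Module (PolyA m) M]
    {D D' : Derivation ℂ (PolyA m) M} (hp : ∀ a, D ∘ pVec a = D' ∘ pVec a)
    (hq : ∀ b, D ∘ qVec b = D' ∘ qVec b) : D = D' := by
  refine MvPolynomial.derivation_ext fun v => ?_
  rcases v with ⟨a, μ⟩ | ⟨b, ν⟩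
  · exact congrFun (hp a) μ
  · exact congrFun (hq b) ν

variable (s s' : Matrix (Fin m) (Fin m) ℂ) (l l' : ℕ)

lemma Dsl_comp_pVec (a : ℕ) :
    Dsl s l ∘ pVec a = pVec (a + l) ᵥ* s.map (algebraMap ℂ (PolyA m)) := by
  ext1 μ
  simp [Dsl, pVec, vecMul, dotProduct, mkDerivation_X, Algebra.smul_def, mul_comm]

lemma Dsl_comp_qVec (b : ℕ) :
    Dsl s l ∘ qVec b = -(-1 : ℂ) ^ l • s.map (algebraMap ℂ (PolyA m)) *ᵥ qVec (b + l) := by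
  ext1 μ
  simp [Dsl, qVec, mulVec, dotProduct, mkDerivation_X, Algebra.smul_def]

lemma Dsl_comp_Dsl_comp_pVec (a : ℕ) :
    Dsl s l ∘ Dsl s' l' ∘ pVec a =
      pVec (a + (l + l')) ᵥ* (s * s').map (algebraMap ℂ (PolyA m)) := by
  rw [Dsl_comp_pVec, derivation_comp_vecMul, Dsl_comp_pVec, vecMul_vecMul, ← Matrix.map_mul,
    add_right_comm, add_assoc]

lemma Dsl_comp_Dsl_comp_qVec (b : ℕ) :
    Dsl s l ∘ Dsl s' l' ∘ qVec b =
      (-1 : ℂ) ^ (l + l') • (s' * s).map (algebraMap ℂ (PolyA m)) *ᵥ qVec (b + (l + l')) := by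
  rw [Dsl_comp_qVec, derivation_comp_smul, derivation_comp_mulVec, Dsl_comp_qVec, mulVec_smul,
    mulVec_mulVec, ← Matrix.map_mul, smul_smul, neg_mul_neg, ← pow_add, add_comm l' l,
    add_right_comm, add_assoc]

theorem Dsl_lie_Dsl : ⁅Dsl s l, Dsl s' l'⁆ = Dsl (s * s' - s' * s) (l + l') := by
  have lie_comp (v : Fin m → PolyA m) : ⇑⁅Dsl s l, Dsl s' l'⁆ ∘ v =
      Dsl s l ∘ Dsl s' l' ∘ v - Dsl s' l' ∘ Dsl s l ∘ v :=
    funext fun i => Derivation.commutator_apply (v i)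
  refine derivation_ext_pVec_qVec (fun a => ?_) (fun b => ?_)
  · rw [lie_comp, Dsl_comp_Dsl_comp_pVec, Dsl_comp_Dsl_comp_pVec, Dsl_comp_pVec, add_comm l' l,
      ← vecMul_sub, Matrix.map_sub _ (map_sub _)]
  · rw [lie_comp, Dsl_comp_Dsl_comp_qVec, Dsl_comp_Dsl_comp_qVec, Dsl_comp_qVec, add_comm l' l,
      Matrix.map_sub _ (map_sub _), sub_mulVec, smul_sub, neg_smul, neg_smul]
    abel

lemma Dsl_pqForm (i j : ℕ) :
    Dsl s l (pqForm s' i j) =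
      pqForm (s * s') (i + l) j - (-1 : ℂ) ^ l • pqForm (s' * s) i (j + l) := by
  unfold pqForm
  rw [derivation_dotProduct, derivation_comp_mulVec, Dsl_comp_pVec, Dsl_comp_qVec, mulVec_smul,
    dotProduct_smul, ← dotProduct_mulVec, mulVec_mulVec, mulVec_mulVec, ← Matrix.map_mul,
    ← Matrix.map_mul, neg_smul, ← sub_eq_add_neg]

lemma Psl_eq_sum_pqForm :
    Psl s l = ∑ i ∈ Finset.range l, (-1 : ℂ) ^ (l - 1 - i) • pqForm s i (l - 1 - i) := by
  simp only [Psl, pqForm, pVec, qVec, dotProduct, mulVec, map_apply, Finset.mul_sum,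
    Algebra.smul_def, mul_left_comm]

lemma Psl_sub : Psl (s - s') l = Psl s l - Psl s' l := by
  simp only [Psl, Matrix.sub_apply, sub_smul, Finset.sum_sub_distrib, smul_sub]

lemma Psl_add_eq_sum_add_sum :
    Psl s (l + l') =
      ∑ i ∈ Finset.range l,
          (-1 : ℂ) ^ (l - 1 - i) • (-1 : ℂ) ^ l' • pqForm s i (l - 1 - i + l') +
        ∑ i ∈ Finset.range l', (-1 : ℂ) ^ (l' - 1 - i) • pqForm s (i + l) (l' - 1 - i) := by
  rw [Psl_eq_sum_pqForm, Finset.sum_range_add]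
  refine congrArg₂ (· + ·) (Finset.sum_congr rfl fun i hi => ?_)
    (Finset.sum_congr rfl fun i hi => ?_) <;> rw [Finset.mem_range] at hi
  · rw [smul_smul, ← pow_add, show l + l' - 1 - i = l - 1 - i + l' by lia]
  · rw [show l + l' - 1 - (l + i) = l' - 1 - i by lia, add_comm l i]

lemma Dsl_Psl :
    Dsl s l (Psl s' l') =
      ∑ i ∈ Finset.range l', (-1 : ℂ) ^ (l' - 1 - i) • pqForm (s * s') (i + l) (l' - 1 - i) -
        ∑ i ∈ Finset.range l',
          (-1 : ℂ) ^ (l' - 1 - i) • (-1 : ℂ) ^ l • pqForm (s' * s) i (l' - 1 - i + l) := by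
  simp only [Psl_eq_sum_pqForm, map_sum, Derivation.map_smul, Dsl_pqForm, smul_sub,
    Finset.sum_sub_distrib]

theorem Dsl_Psl_sub_Dsl_Psl :
    Dsl s l (Psl s' l') - Dsl s' l' (Psl s l) = Psl (s * s' - s' * s) (l + l') := by
  rw [Psl_sub, Psl_add_eq_sum_add_sum (s * s') l l', add_comm l l',
    Psl_add_eq_sum_add_sum (s' * s) l' l, Dsl_Psl, Dsl_Psl]
  abel

end Quantization

/-- The assignment `s·z^{−l} ↦ ŝ(s,l)` is a Lie algebra homomorphism:
`[ŝ(s,l), ŝ(s',l')] = ŝ(s·s' − s'·s, l+l')`. -/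
theorem shat_commutator (m : ℕ) (s s' : Matrix (Fin m) (Fin m) ℂ)
    (l l' : ℕ) (hl : 1 ≤ l) (hl' : 1 ≤ l') :
    ∀ f : PolyA m,
      shat s l (shat s' l' f) - shat s' l' (shat s l f)
        = shat (s * s' - s' * s) (l + l') f := by
  intro f
  calc
    _ = ⁅Dsl s l, Dsl s' l'⁆ f + (Dsl s l (Psl s' l') - Dsl s' l' (Psl s l)) * f :=
      derivation_add_mul_commutator _ _ _ _ f
    _ = shat (s * s' - s' * s) (l + l') f := by rw [Dsl_lie_Dsl, Dsl_Psl_sub_Dsl_Psl, shat]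
end

section
/- Let A = ℂ[p_{a,μ}, q_b^ν : a, b ∈ ℕ, μ, ν ∈ {1,…,m}] be the polynomial ring in the displayed countable family of variables. For r ∈ Mat_{m×m}(ℂ) and an integer l ≥ 1, let r̂(r,l) : A → A be the ℂ-linear operator E_{r,l} + S_{r,l}, where E_{r,l} is the unique ℂ-derivation of A with E_{r,l}(p_{a+l,κ}) = Σ_μ r_{μκ}·p_{a,μ} for a ≥ 0, E_{r,l}(p_{c,κ}) = 0 for c < l, E_{r,l}(q_{b+l}^κ) = −(−1)^l·Σ_ν r_{κν}·q_b^ν for b ≥ 0, E_{r,l}(q_c^κ) = 0 for c < l; and S_{r,l} := Σ_{i+j=l−1, i,j≥0} (−1)^{i+1} Σ_{κ,λ} r_{κλ}·(∂/∂q_i^κ) ∘ (∂/∂p_{j,λ}) is a second-order differential operator. Then for all r, r' ∈ Mat_{m×m}(ℂ) and all integers l, l' ≥ 1: r̂(r,l) ∘ r̂(r',l') − r̂(r',l') ∘ r̂(r,l) = r̂(r·r' − r'·r, l + l'). -/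
/-- The derivation `E_{r,l}` with `E(p_{a+l,κ}) = Σ_μ r_{μκ}·p_{a,μ}`,
`E(p_c) = 0` for `c < l`, `E(q_{b+l}^κ) = −(−1)^l·Σ_ν r_{κν}·q_b^ν`, and
`E(q_c^κ) = 0` for `c < l`. -/
noncomputable def Erl {m : ℕ} (r : Matrix (Fin m) (Fin m) ℂ) (l : ℕ) :
    Derivation ℂ (PolyA m) (PolyA m) :=
  MvPolynomial.mkDerivation ℂ fun v =>
    match v with
    | .inl (c, κ) =>
        if l ≤ c then ∑ μ : Fin m, r μ κ • MvPolynomial.X (.inl (c - l, μ)) else 0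
    | .inr (c, κ) =>
        if l ≤ c then -(-1 : ℂ) ^ l • ∑ ν : Fin m, r κ ν • MvPolynomial.X (.inr (c - l, ν))
        else 0

/-- The second-order operator
`S_{r,l} = Σ_{i+j=l−1} (−1)^{i+1} Σ_{κ,λ} r_{κλ}·(∂/∂q_i^κ)∘(∂/∂p_{j,λ})`. -/
noncomputable def Srl {m : ℕ} (r : Matrix (Fin m) (Fin m) ℂ) (l : ℕ) :
    PolyA m → PolyA m :=
  fun f => ∑ i ∈ Finset.range l, (-1 : ℂ) ^ (i + 1) •
    ∑ κ : Fin m, ∑ lam : Fin m,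
      r κ lam • MvPolynomial.pderiv (.inr (i, κ))
        (MvPolynomial.pderiv (.inl (l - 1 - i, lam)) f)

/-- The quantization `r̂(r,l) = E_{r,l} + S_{r,l}` of the upper-triangular element
`r·z^l`. -/
noncomputable def rhat {m : ℕ} (r : Matrix (Fin m) (Fin m) ℂ) (l : ℕ) :
    PolyA m → PolyA m :=
  fun f => Erl r l f + Srl r l f

open MvPolynomial Finset

attribute [local instance] LieRing.ofAssociativeRing

section Lowering

variable {R n A V : Type*} [CommRing R] [Fintype n] [AddCommGroup V] [Module R V]
  [CommRing A] [Algebra R A] [Module A V]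

/-- The action of `M z^l` on a family of vectors indexed by a power of `z` and a coordinate: the
power of `z` drops by `l`, entries whose power would become negative vanish, and the coordinates are
combined by the columns of `M`. -/
def lowering (M : Matrix n n R) (l : ℕ) (x : ℕ × n → V) : ℕ × n → V :=
  fun a => if l ≤ a.1 then ∑ μ, M μ a.2 • x (a.1 - l, μ) else 0

theorem derivation_lowering (D : Derivation R A V) (M : Matrix n n R) (l : ℕ) (x : ℕ × n → A)
    (a : ℕ × n) : D (lowering M l x a) = lowering M l (fun b => D (x b)) a := by
  simp only [lowering, apply_ite D, map_sum, Derivation.map_smul, map_zero]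

theorem lowering_sub_left (M N : Matrix n n R) (l : ℕ) (x : ℕ × n → V) :
    lowering (M - N) l x = lowering M l x - lowering N l x := by
  ext a
  simp only [lowering, Pi.sub_apply, Matrix.sub_apply, sub_smul, sum_sub_distrib]
  split_ifs <;> simp

theorem lowering_lowering (M N : Matrix n n R) (k l : ℕ) (x : ℕ × n → V) :
    lowering N l (lowering M k x) = lowering (M * N) (k + l) x := by
  ext ⟨c, κ⟩
  by_cases hl : l ≤ c
  · have hk : k ≤ c - l ↔ k + l ≤ c := by omega
    have hc : c - l - k = c - (k + l) := by omega
    by_cases hkl : k + l ≤ c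
    · simp only [lowering, hl, hk, hkl, hc, if_true, Matrix.mul_apply, smul_sum, sum_smul,
        smul_smul, mul_comm (N _ _)]
      exact sum_comm
    · simp [lowering, hk, hkl]
  · have hkl : ¬ k + l ≤ c := by omega
    simp [lowering, hl, hkl]

theorem lowering_single [DecidableEq n] (M : Matrix n n R) (l j : ℕ) (κ : n) (v : V) :
    lowering M l (Pi.single (j, κ) v) = ∑ μ, M κ μ • Pi.single (j + l, μ) v := by
  ext ⟨c, ν⟩
  have hc : c = j + l ↔ l ≤ c ∧ c - l = j := by omega
  by_cases hl : l ≤ c <;> by_cases hj : c - l = j <;>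
    simp [lowering, Finset.sum_apply, Pi.single_apply, hc, hl, hj]

end Lowering

section Contraction

variable {R n B : Type*} [CommRing R] [Fintype n] [Ring B] [Algebra R B]

/-- The pairing `Σ_{κ,λ} M_{κλ} u_κ v_λ` of two vectors with entries in a noncommutative algebra. -/
def contraction (M : Matrix n n R) (u v : n → B) : B :=
  ∑ κ, ∑ ν, M κ ν • (u κ * v ν)

theorem contraction_sub_matrix (M N : Matrix n n R) (u v : n → B) :
    contraction (M - N) u v = contraction M u v - contraction N u v := by
  simp only [contraction, Matrix.sub_apply, sub_smul, sum_sub_distrib]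

theorem contraction_neg_matrix (M : Matrix n n R) (u v : n → B) :
    contraction (-M) u v = -contraction M u v := by
  simp only [contraction, Matrix.neg_apply, neg_smul, sum_neg_distrib]

theorem contraction_sum_smul_left (M N : Matrix n n R) (u v : n → B) :
    contraction M (fun κ => ∑ ν, N κ ν • u ν) v = contraction (N.transpose * M) u v := by
  simp only [contraction, Matrix.mul_apply, Matrix.transpose_apply, sum_mul, smul_mul_assoc,
    smul_sum, sum_smul, smul_smul]
  rw [sum_comm_cycle]
  refine sum_congr rfl fun _ _ => ?_
  rw [sum_comm]
  simp only [mul_comm]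

theorem contraction_sum_smul_right (M N : Matrix n n R) (u v : n → B) :
    contraction M u (fun κ => ∑ ν, N κ ν • v ν) = contraction (M * N) u v := by
  simp only [contraction, Matrix.mul_apply, mul_sum, mul_smul_comm, smul_sum, sum_smul, smul_smul]
  exact sum_congr rfl fun _ _ => sum_comm

theorem lie_contraction (x : B) (M : Matrix n n R) (u v : n → B) :
    ⁅x, contraction M u v⁆ =
      contraction M (fun κ => ⁅x, u κ⁆) v + contraction M u fun κ => ⁅x, v κ⁆ := by
  have leibniz (c : R) (a b : B) : ⁅x, c • (a * b)⁆ = c • (⁅x, a⁆ * b) + c • (a * ⁅x, b⁆) := by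
    simp only [Ring.lie_def, mul_smul_comm, smul_mul_assoc, ← smul_sub, ← smul_add]
    noncomm_ring
  simp only [contraction, lie_sum, leibniz, sum_add_distrib]

theorem commute_contraction {x : B} (M : Matrix n n R) {u v : n → B}
    (hu : ∀ κ, Commute x (u κ)) (hv : ∀ κ, Commute x (v κ)) : Commute x (contraction M u v) :=
  Commute.sum_right _ _ _ fun κ _ => Commute.sum_right _ _ _ fun ν _ =>
    ((hu κ).mul_right (hv ν)).smul_right _

end Contraction

section PolynomialDerivation

variable {R : Type*} [CommRing R]

theorem derivation_sum_apply {A V ι : Type*} [CommRing A] [Algebra R A] [AddCommGroup V]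
    [Module R V] [Module A V] (s : Finset ι) (D : ι → Derivation R A V) (f : A) :
    (∑ i ∈ s, D i) f = ∑ i ∈ s, D i f := by
  rw [← Finset.sum_apply]
  exact congrFun (map_sum Derivation.coeFnAddMonoidHom D s) f

variable {σ : Type*}

theorem derivation_lie_pderiv_X (D : Derivation R (MvPolynomial σ R) (MvPolynomial σ R)) (v w : σ) :
    ⁅D, pderiv v⁆ (X w) = -pderiv v (D (X w)) := by
  classical
  have h : D (pderiv v (X w)) = 0 := by
    rw [pderiv_X, Pi.single_apply]
    split_ifs <;> simp
  rw [Derivation.commutator_apply, h, zero_sub]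

theorem commute_pderiv (v w : σ) :
    Commute (pderiv (R := R) v : Module.End R (MvPolynomial σ R))
      (pderiv (R := R) w : Module.End R (MvPolynomial σ R)) := by
  classical
  have h : ⁅pderiv (R := R) v, pderiv (R := R) w⁆ = 0 := derivation_ext fun x => by
    rw [derivation_lie_pderiv_X, pderiv_X, Pi.single_apply]
    split_ifs <;> simp
  rw [commute_iff_lie_eq, ← Derivation.commutator_coe_linear_map, h, Derivation.coe_zero_linearMap]

variable {n : Type*} [Fintype n]

theorem pderiv_lowering_X {s : ℕ × n → σ} (hs : s.Injective) (M : Matrix n n R) (l j : ℕ) (κ : n)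
    (a : ℕ × n) :
    pderiv (s (j, κ)) (lowering M l (fun b => (X (s b) : MvPolynomial σ R)) a) =
      ∑ ν, M κ ν • pderiv (s (j + l, ν)) (X (s a)) := by
  classical
  have pderiv_X_eq_single (c : ℕ × n) :
      (fun b => pderiv (s c) (X (s b) : MvPolynomial σ R)) = Pi.single c 1 := by
    funext b
    simp only [pderiv_X, Pi.single_apply, hs.eq_iff]
  rw [derivation_lowering, pderiv_X_eq_single, lowering_single, Finset.sum_apply]
  simp only [Pi.smul_apply, ← pderiv_X_eq_single]

theorem pderiv_lowering_X_of_notMem_range {s : ℕ × n → σ} {v : σ} (hv : v ∉ Set.range s)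
    (M : Matrix n n R) (l : ℕ) (a : ℕ × n) :
    pderiv v (lowering M l (fun b => (X (s b) : MvPolynomial σ R)) a) = 0 := by
  have h (b : ℕ × n) : pderiv v (X (s b) : MvPolynomial σ R) = 0 :=
    pderiv_X_of_ne fun hb => hv ⟨b, hb⟩
  rw [derivation_lowering]
  simp only [lowering, h, smul_zero, sum_const_zero, ite_self]

end PolynomialDerivation

section Quantization

variable {R n : Type*} [CommRing R]

/-- The variables `p_{a,μ}` (`inl (a, μ)`) and `q_b^ν` (`inr (b, ν)`), with coordinates in an
arbitrary type `n`. -/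
abbrev PQIndex (n : Type*) := (ℕ × n) ⊕ (ℕ × n)

/-- The operators `∂/∂p_{j,κ}`, as a vector indexed by `κ`. -/
noncomputable def pPartial (R : Type*) [CommRing R] (j : ℕ) (κ : n) :
    Module.End R (MvPolynomial (PQIndex n) R) :=
  (pderiv (Sum.inl (j, κ)) : Derivation R _ (MvPolynomial (PQIndex n) R))

/-- The operators `∂/∂q_i^κ`, as a vector indexed by `κ`. -/
noncomputable def qPartial (R : Type*) [CommRing R] (i : ℕ) (κ : n) :
    Module.End R (MvPolynomial (PQIndex n) R) :=
  (pderiv (Sum.inr (i, κ)) : Derivation R _ (MvPolynomial (PQIndex n) R))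

variable [Fintype n]

/-- The derivation acting on the `p`-variables as `M z^l` and on the `q`-variables as `N z^l`. -/
noncomputable def loweringDerivation (M N : Matrix n n R) (l : ℕ) :
    Derivation R (MvPolynomial (PQIndex n) R) (MvPolynomial (PQIndex n) R) :=
  mkDerivation R (Sum.elim (lowering M l fun a => X (.inl a)) (lowering N l fun a => X (.inr a)))

theorem loweringDerivation_X_inl (M N : Matrix n n R) (l : ℕ) (a : ℕ × n) :
    loweringDerivation M N l (X (.inl a)) = lowering M l (fun b => X (.inl b)) a := by
  rw [loweringDerivation, mkDerivation_X, Sum.elim_inl]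

theorem loweringDerivation_X_inr (M N : Matrix n n R) (l : ℕ) (a : ℕ × n) :
    loweringDerivation M N l (X (.inr a)) = lowering N l (fun b => X (.inr b)) a := by
  rw [loweringDerivation, mkDerivation_X, Sum.elim_inr]

theorem loweringDerivation_lie (M N M' N' : Matrix n n R) (l l' : ℕ) :
    ⁅loweringDerivation M N l, loweringDerivation M' N' l'⁆ =
      loweringDerivation (M * M' - M' * M) (N * N' - N' * N) (l + l') := by
  refine derivation_ext ?_
  rintro (a | a)
  · simp only [Derivation.commutator_apply, loweringDerivation_X_inl, derivation_lowering,
      lowering_lowering, lowering_sub_left, add_comm l' l, Pi.sub_apply]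
  · simp only [Derivation.commutator_apply, loweringDerivation_X_inr, derivation_lowering,
      lowering_lowering, lowering_sub_left, add_comm l' l, Pi.sub_apply]

theorem loweringDerivation_lie_pPartial (M N : Matrix n n R) (l j : ℕ) (κ : n) :
    ⁅(loweringDerivation M N l : Module.End R (MvPolynomial (PQIndex n) R)), pPartial R j κ⁆ =
      ∑ ν, (-M) κ ν • pPartial R (j + l) ν := by
  have lie_pderiv : ⁅loweringDerivation M N l, pderiv (R := R) (Sum.inl (j, κ) : PQIndex n)⁆ =
      ∑ ν, (-M) κ ν • pderiv (R := R) (Sum.inl (j + l, ν) : PQIndex n) := by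
    refine derivation_ext ?_
    rintro (a | a)
    · rw [derivation_lie_pderiv_X, loweringDerivation_X_inl, pderiv_lowering_X Sum.inl_injective]
      simp [derivation_sum_apply]
    · rw [derivation_lie_pderiv_X, loweringDerivation_X_inr, pderiv_lowering_X_of_notMem_range]
      · simp [derivation_sum_apply]
      · simp
  rw [pPartial, ← Derivation.commutator_coe_linear_map, lie_pderiv]
  refine LinearMap.ext fun f => ?_
  simp [derivation_sum_apply, pPartial]

theorem loweringDerivation_lie_qPartial (M N : Matrix n n R) (l i : ℕ) (κ : n) :
    ⁅(loweringDerivation M N l : Module.End R (MvPolynomial (PQIndex n) R)), qPartial R i κ⁆ =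
      ∑ ν, (-N) κ ν • qPartial R (i + l) ν := by
  have lie_pderiv : ⁅loweringDerivation M N l, pderiv (R := R) (Sum.inr (i, κ) : PQIndex n)⁆ =
      ∑ ν, (-N) κ ν • pderiv (R := R) (Sum.inr (i + l, ν) : PQIndex n) := by
    refine derivation_ext ?_
    rintro (a | a)
    · rw [derivation_lie_pderiv_X, loweringDerivation_X_inl, pderiv_lowering_X_of_notMem_range]
      · simp [derivation_sum_apply]
      · simp
    · rw [derivation_lie_pderiv_X, loweringDerivation_X_inr, pderiv_lowering_X Sum.inr_injective]
      simp [derivation_sum_apply]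
  rw [qPartial, ← Derivation.commutator_coe_linear_map, lie_pderiv]
  refine LinearMap.ext fun f => ?_
  simp [derivation_sum_apply, qPartial]

theorem loweringDerivation_lie_contraction (M N K : Matrix n n R) (l i j : ℕ) :
    ⁅(loweringDerivation M N l : Module.End R (MvPolynomial (PQIndex n) R)),
        contraction K (qPartial R i) (pPartial R j)⁆ =
      contraction (-(N.transpose * K)) (qPartial R (i + l)) (pPartial R j) -
        contraction (K * M) (qPartial R i) (pPartial R (j + l)) := by
  simp only [lie_contraction, loweringDerivation_lie_qPartial, loweringDerivation_lie_pPartial,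
    contraction_sum_smul_left, contraction_sum_smul_right, Matrix.transpose_neg, neg_mul, mul_neg]
  rw [contraction_neg_matrix (K * M), sub_eq_add_neg]

/-- The matrix `r*` for which `r z^l ↦ r* z^l` is the contragredient representation, composed with
`z ↦ -z`. -/
def twistedDual (r : Matrix n n R) (l : ℕ) : Matrix n n R :=
  -(-1 : R) ^ l • r.transpose

theorem twistedDual_lie (r r' : Matrix n n R) (l l' : ℕ) :
    twistedDual r l * twistedDual r' l' - twistedDual r' l' * twistedDual r l =
      twistedDual (r * r' - r' * r) (l + l') := by
  simp only [twistedDual, Matrix.transpose_sub, Matrix.transpose_mul, smul_mul_smul_comm, smul_sub,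
    pow_add, mul_comm ((-1 : R) ^ l'), neg_mul, mul_neg, neg_smul, neg_neg]
  abel

/-- The derivation `E_{r,l}`. -/
noncomputable def quantizedDerivation (r : Matrix n n R) (l : ℕ) :
    Derivation R (MvPolynomial (PQIndex n) R) (MvPolynomial (PQIndex n) R) :=
  loweringDerivation r (twistedDual r l) l

theorem quantizedDerivation_lie (r r' : Matrix n n R) (l l' : ℕ) :
    ⁅quantizedDerivation r l, quantizedDerivation r' l'⁆ =
      quantizedDerivation (r * r' - r' * r) (l + l') := by
  simp only [quantizedDerivation, loweringDerivation_lie, twistedDual_lie]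

/-- The term `(-1)^{i+1} Σ_{κ,λ} r_{κλ} (∂/∂q_i^κ) ∘ (∂/∂p_{l-1-i,λ})` of `S_{r,l}`, meaningful for
`i < l`. -/
noncomputable def quantizedContraction (r : Matrix n n R) (l i : ℕ) :
    Module.End R (MvPolynomial (PQIndex n) R) :=
  contraction ((-1 : R) ^ (i + 1) • r) (qPartial R i) (pPartial R (l - 1 - i))

theorem quantizedContraction_sub (r r' : Matrix n n R) (l i : ℕ) :
    quantizedContraction (r - r') l i =
      quantizedContraction r l i - quantizedContraction r' l i := by
  simp only [quantizedContraction, smul_sub, contraction_sub_matrix]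

theorem commute_quantizedContraction (r r' : Matrix n n R) (l l' i i' : ℕ) :
    Commute (quantizedContraction r l i) (quantizedContraction r' l' i') := by
  have commute_partial (v : PQIndex n) :
      Commute (quantizedContraction r l i) (pderiv (R := R) v : Module.End R _) :=
    (commute_contraction _ (fun _ => commute_pderiv _ _) fun _ => commute_pderiv _ _).symm
  exact commute_contraction _ (fun _ => commute_partial _) fun _ => commute_partial _

theorem quantizedDerivation_lie_quantizedContraction (r r' : Matrix n n R) (l : ℕ) {l' i : ℕ}
    (hi : i < l') :
    ⁅(quantizedDerivation r l : Module.End R (MvPolynomial (PQIndex n) R)),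
        quantizedContraction r' l' i⁆ =
      quantizedContraction (r * r') (l + l') (l + i) -
        quantizedContraction (r' * r) (l + l') i := by
  have hq : l + l' - 1 - (l + i) = l' - 1 - i := by omega
  have hp : l + l' - 1 - i = l' - 1 - i + l := by omega
  have raised_q : -((twistedDual r l).transpose * ((-1 : R) ^ (i + 1) • r')) =
      (-1 : R) ^ (l + i + 1) • (r * r') := by
    have sign : (-1 : R) ^ (i + 1) * (-1) ^ l = (-1) ^ (l + i + 1) := by ring
    simp [twistedDual, smul_smul, sign]
  rw [quantizedContraction, quantizedDerivation, loweringDerivation_lie_contraction, raised_q,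
    Matrix.smul_mul, quantizedContraction, quantizedContraction, hq, hp, add_comm i l]

/-- The second-order operator `S_{r,l}`. -/
noncomputable def quantizedPairing (r : Matrix n n R) (l : ℕ) :
    Module.End R (MvPolynomial (PQIndex n) R) :=
  ∑ i ∈ range l, quantizedContraction r l i

theorem quantizedDerivation_lie_quantizedPairing (r r' : Matrix n n R) (l l' : ℕ) :
    ⁅(quantizedDerivation r l : Module.End R (MvPolynomial (PQIndex n) R)),
        quantizedPairing r' l'⁆ =
      ∑ i ∈ Ico l (l + l'), quantizedContraction (r * r') (l + l') i -
        ∑ i ∈ range l', quantizedContraction (r' * r) (l + l') i := by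
  rw [quantizedPairing, lie_sum, sum_Ico_eq_sum_range, Nat.add_sub_cancel_left, ← sum_sub_distrib]
  exact sum_congr rfl fun i hi =>
    quantizedDerivation_lie_quantizedContraction r r' l (mem_range.mp hi)

-- The terms with matrix `r * r'` come from the `q`-indices `[l, l + l')` in the first bracket and
-- `[0, l)` in the second; those with matrix `r' * r` from `[0, l')` and `[l', l + l')`.
theorem quantizedDerivation_lie_quantizedPairing_sub (r r' : Matrix n n R) (l l' : ℕ) :
    ⁅(quantizedDerivation r l : Module.End R (MvPolynomial (PQIndex n) R)),
          quantizedPairing r' l'⁆ -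
        ⁅(quantizedDerivation r' l' : Module.End R (MvPolynomial (PQIndex n) R)),
          quantizedPairing r l⁆ =
      quantizedPairing (r * r' - r' * r) (l + l') := by
  rw [quantizedDerivation_lie_quantizedPairing, quantizedDerivation_lie_quantizedPairing,
    quantizedPairing, add_comm l' l]
  simp only [quantizedContraction_sub, sum_sub_distrib]
  rw [← sum_range_add_sum_Ico _ (Nat.le_add_right l l'),
    ← sum_range_add_sum_Ico _ (Nat.le_add_left l' l)]
  abel

theorem commute_quantizedPairing (r r' : Matrix n n R) (l l' : ℕ) :
    Commute (quantizedPairing r l) (quantizedPairing r' l') :=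
  Commute.sum_left _ _ _ fun _ _ => Commute.sum_right _ _ _ fun _ _ =>
    commute_quantizedContraction _ _ _ _ _ _

/-- The quantization `r̂(r,l) = E_{r,l} + S_{r,l}` of `r z^l`. -/
noncomputable def quantization (r : Matrix n n R) (l : ℕ) :
    Module.End R (MvPolynomial (PQIndex n) R) :=
  quantizedDerivation r l + quantizedPairing r l

theorem rhat_commutator_general (r r' : Matrix n n R) (l l' : ℕ) :
    ⁅quantization r l, quantization r' l'⁆ = quantization (r * r' - r' * r) (l + l') := by
  rw [quantization, quantization, quantization, ← quantizedDerivation_lie,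
    ← quantizedDerivation_lie_quantizedPairing_sub, Derivation.commutator_coe_linear_map,
    add_lie, lie_add, lie_add, (commute_quantizedPairing r r' l l').lie_eq,
    ← lie_skew (quantizedPairing r l)]
  abel

end Quantization

theorem Erl_eq_quantizedDerivation {m : ℕ} (r : Matrix (Fin m) (Fin m) ℂ) (l : ℕ) :
    Erl r l = quantizedDerivation r l := by
  refine derivation_ext ?_
  rintro (⟨c, κ⟩ | ⟨c, κ⟩)
  · simp [Erl, quantizedDerivation, loweringDerivation_X_inl, mkDerivation_X, lowering]
  · simp [Erl, quantizedDerivation, loweringDerivation_X_inr, mkDerivation_X, lowering,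
      twistedDual, smul_sum, smul_smul]

theorem Srl_eq_quantizedPairing {m : ℕ} (r : Matrix (Fin m) (Fin m) ℂ) (l : ℕ) (f : PolyA m) :
    Srl r l f = quantizedPairing r l f := by
  simp [Srl, quantizedPairing, quantizedContraction, contraction, qPartial, pPartial, smul_sum,
    smul_smul]

theorem rhat_eq_quantization {m : ℕ} (r : Matrix (Fin m) (Fin m) ℂ) (l : ℕ) (f : PolyA m) :
    rhat r l f = quantization r l f := by
  rw [rhat, Erl_eq_quantizedDerivation, Srl_eq_quantizedPairing]
  rfl

/-- The assignment `r·z^{l} ↦ r̂(r,l)` is a Lie algebra homomorphism: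
`[r̂(r,l), r̂(r',l')] = r̂(r·r' − r'·r, l+l')`. -/
theorem rhat_commutator (m : ℕ) (r r' : Matrix (Fin m) (Fin m) ℂ)
    (l l' : ℕ) (hl : 1 ≤ l) (hl' : 1 ≤ l') :
    ∀ f : PolyA m,
      rhat r l (rhat r' l' f) - rhat r' l' (rhat r l f)
        = rhat (r * r' - r' * r) (l + l') f := by
  intro f
  simp only [rhat_eq_quantization]
  exact LinearMap.congr_fun (rhat_commutator_general r r' l l') f
end
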